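/- arXiv:math/0505206 — 2 statements merged into one kernel-verified Lean document; each statement's English description precedes it below -/
import Mathlib

section
/- Let R = ℤ[t, t⁻¹] be the ring of Laurent polynomials with integer coefficients. The R-module (R/(2t − 1)) × (R/(t − 2)) is not isomorphic, as an R-module, to the cyclic R-module R/((2t − 1)(t − 2)). -/
open LaurentPolynomial

/-!
A cyclic module `M × N` over a commutative ring forces the annihilators of `M` and `N` to be
coprime: if `(m, n)` is a generator and `r • (m, n) = (m, 0)`, then `1 - r` annihilates `M` and `r`
annihilates `N`. Hence `R/(x) × R/(y)` can be cyclic only if `x` and `y` generate the unit ideal.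
But `2t - 1` and `t - 2` both vanish at `t = -1` modulo `3`.
-/

section CyclicProduct

variable {R : Type*} [CommRing R]

theorem isCoprime_annihilator_of_isPrincipal_prod (M N : Type*) [AddCommGroup M] [Module R M]
    [AddCommGroup N] [Module R N] [Module.IsPrincipal R (M × N)] :
    IsCoprime (Module.annihilator R M) (Module.annihilator R N) := by
  obtain ⟨⟨m, n⟩, hmn⟩ := Submodule.IsPrincipal.principal (⊤ : Submodule R (M × N))
  have generates (z : M × N) : ∃ c : R, c • (m, n) = z :=
    Submodule.mem_span_singleton.mp (hmn ▸ Submodule.mem_top)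
  obtain ⟨r, hr⟩ := generates (m, 0)
  obtain ⟨hrm, hrn⟩ : r • m = m ∧ r • n = 0 := Prod.ext_iff.mp hr
  have one_sub_mem_annihilator : 1 - r ∈ Module.annihilator R M := by
    refine Module.mem_annihilator.mpr fun x => ?_
    obtain ⟨c, hc⟩ := generates (x, 0)
    obtain rfl : c • m = x := congrArg Prod.fst hc
    rw [smul_comm, sub_smul, one_smul, hrm, sub_self, smul_zero]
  have mem_annihilator : r ∈ Module.annihilator R N := by
    refine Module.mem_annihilator.mpr fun y => ?_
    obtain ⟨c, hc⟩ := generates (0, y)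
    obtain rfl : c • n = y := congrArg Prod.snd hc
    rw [smul_comm, hrn, smul_zero]
  exact Ideal.isCoprime_iff_exists.mpr
    ⟨1 - r, one_sub_mem_annihilator, r, mem_annihilator, sub_add_cancel 1 r⟩

theorem isCoprime_of_prod_quotient_equiv_quotient {I J K : Ideal R}
    (e : ((R ⧸ I) × (R ⧸ J)) ≃ₗ[R] R ⧸ K) : IsCoprime I J := by
  have : Module.IsPrincipal R (R ⧸ K) := .of_surjective K.mkQ K.mkQ_surjective
  have : Module.IsPrincipal R ((R ⧸ I) × (R ⧸ J)) := e.isPrincipal_iff.mpr this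
  simpa only [Ideal.annihilator_quotient] using
    isCoprime_annihilator_of_isPrincipal_prod (R := R) (R ⧸ I) (R ⧸ J)

end CyclicProduct

theorem not_isCoprime_of_map_eq_zero {R S : Type*} [CommSemiring R] [CommSemiring S] [Nontrivial S]
    (f : R →+* S) {x y : R} (hx : f x = 0) (hy : f y = 0) : ¬ IsCoprime x y := fun h =>
  not_isCoprime_zero_zero (R := S) (by simpa only [hx, hy] using h.map f)

theorem not_isCoprime_two_mul_T_sub_one_T_sub_two :
    ¬ IsCoprime (2 * T 1 - 1 : ℤ[T;T⁻¹]) (T 1 - 2) := by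
  let ev : ℤ[T;T⁻¹] →+* ZMod 3 := eval₂ (Int.castRingHom (ZMod 3)) (-1)
  have ev_T : ev (T 1) = -1 := by
    simp only [ev, eval₂_T, zpow_one, Units.val_neg, Units.val_one]
  refine not_isCoprime_of_map_eq_zero ev ?_ ?_
  · rw [map_sub, map_mul, ev_T, map_ofNat, map_one]
    decide
  · rw [map_sub, ev_T, map_ofNat]
    decide

/-- The `ℤ[t,t⁻¹]`-module `(ℤ[t,t⁻¹]/(2t−1)) × (ℤ[t,t⁻¹]/(t−2))` is not isomorphic to
the cyclic module `ℤ[t,t⁻¹]/((2t−1)(t−2))`. -/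
theorem stmt_1 :
    ¬ Nonempty
      ((((LaurentPolynomial ℤ) ⧸ Ideal.span {(2 * T 1 - 1 : LaurentPolynomial ℤ)}) ×
        ((LaurentPolynomial ℤ) ⧸ Ideal.span {(T 1 - 2 : LaurentPolynomial ℤ)}))
        ≃ₗ[LaurentPolynomial ℤ]
       ((LaurentPolynomial ℤ) ⧸
          Ideal.span {((2 * T 1 - 1) * (T 1 - 2) : LaurentPolynomial ℤ)})) := by
  rintro ⟨e⟩
  exact not_isCoprime_two_mul_T_sub_one_T_sub_two <|
    (Ideal.isCoprime_span_singleton_iff _ _).mp (isCoprime_of_prod_quotient_equiv_quotient e)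
end

section
/- Let Y be a topological space, f : Y ≃ₜ Y a homeomorphism, and P ⊆ Y a subset such that f(P) ⊆ interior(P). Define X = P \ interior(f(P)). Then ⋃_{k ≥ 0} f^k(X) = P \ (⋂_{k ≥ 1} interior(f^k(P))). -/
/-!
Taking images under `f` commutes with taking interiors, so `f^k(X)` is the layer
`f^k(P) \ interior (f^(k+1)(P))`. Every layer lies in `P` because `f(P) ⊆ P`. Conversely, a point of
`P` outside some `interior (f^(k+1)(P))` lies in the layer given by the least such `k`.
-/

open Function Set Topology

theorem iUnion_sdiff_eq_sdiff_iInter {α : Type*} {A B : ℕ → Set α}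
    (hA : ∀ k, A k ⊆ A 0) (hBA : ∀ k, B k ⊆ A (k + 1)) :
    ⋃ k, A k \ B k = A 0 \ ⋂ k, B k := by
  rw [sdiff_iInter]
  refine Subset.antisymm (iUnion_mono fun k => sdiff_subset_sdiff_left (hA k)) fun x hx => ?_
  obtain ⟨hx₀, k, hxk⟩ : x ∈ A 0 ∧ ∃ k, x ∉ B k := by simpa using hx
  by_contra hlayer
  have mem_B_of_mem_A (j : ℕ) (hj : x ∈ A j) : x ∈ B j :=
    not_not.mp fun hxj => hlayer (mem_iUnion_of_mem j ⟨hj, hxj⟩)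
  have mem_A (j : ℕ) : x ∈ A j := by
    induction j with
    | zero => exact hx₀
    | succ j ih => exact hBA j (mem_B_of_mem_A j ih)
  exact hxk (mem_B_of_mem_A k (mem_A k))

theorem image_interior_of_isOpenEmbedding {Y Z : Type*} [TopologicalSpace Y] [TopologicalSpace Z]
    {f : Y → Z} (hf : IsOpenEmbedding f) (s : Set Y) :
    f '' interior s = interior (f '' s) := by
  have hrange : interior (f '' s) ⊆ range f := interior_subset.trans (image_subset_range f s)
  rw [← image_preimage_eq_of_subset hrange,
    hf.isOpenMap.preimage_interior_eq_interior_preimage hf.continuous,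
    preimage_image_eq s hf.injective]

section Iterate

variable {Y : Type*} [TopologicalSpace Y] {f : Y → Y}

theorem isOpenEmbedding_iterate (hf : IsOpenEmbedding f) (k : ℕ) : IsOpenEmbedding f^[k] := by
  induction k with
  | zero => exact IsOpenEmbedding.id
  | succ k ih => exact ih.comp hf

theorem image_iterate_sdiff_interior_image (hf : IsOpenEmbedding f) (P : Set Y) (k : ℕ) :
    f^[k] '' (P \ interior (f '' P)) = f^[k] '' P \ interior (f^[k + 1] '' P) := by
  have hk := isOpenEmbedding_iterate hf k
  rw [image_sdiff hk.injective, image_interior_of_isOpenEmbedding hk, ← image_comp, iterate_succ]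

theorem stmt_6_general (hf : IsOpenEmbedding f) {P : Set Y} (hP : MapsTo f P P) :
    ⋃ k : ℕ, f^[k] '' (P \ interior (f '' P)) = P \ ⋂ k : ℕ, interior (f^[k + 1] '' P) := by
  have hsub (k : ℕ) : f^[k] '' P ⊆ f^[0] '' P := by
    simpa only [iterate_zero, image_id] using (hP.iterate k).image_subset
  simp_rw [image_iterate_sdiff_interior_image hf]
  rw [iUnion_sdiff_eq_sdiff_iInter hsub fun _ => interior_subset, iterate_zero, image_id]

end Iterate

/-- If `f : Y ≃ₜ Y` satisfies `f(P) ⊆ interior P` and `X = P \ interior (f(P))`, then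
`⋃_{k ≥ 0} f^k(X) = P \ (⋂_{k ≥ 1} interior (f^k(P)))`. -/
theorem stmt_6 (Y : Type*) [TopologicalSpace Y] (f : Y ≃ₜ Y) (P : Set Y)
    (hP : f '' P ⊆ interior P)
    (X : Set Y) (hX : X = P \ interior (f '' P)) :
    (⋃ k : ℕ, (f.toEquiv ^ k) '' X) =
      P \ (⋂ k : ℕ, interior ((f.toEquiv ^ (k + 1)) '' P)) := by
  subst hX
  simp only [Equiv.Perm.coe_pow, Homeomorph.coe_toEquiv]
  exact stmt_6_general f.isOpenEmbedding (mapsTo_iff_image_subset.mpr (hP.trans interior_subset))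
end
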